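/- arXiv:1402.0686 — 2 statements merged into one kernel-verified Lean document; each statement's English description precedes it below -/
import Mathlib

section
/- Let (X, Z)ᵀ ∼ CSC₂(γ) be a bivariate canonical skew-Cauchy vector. For any a ∈ ℝ, the random variable Y_a = X + aZ has distribution SC₁(0, 1+a², γ_a) with γ_a = γ/√(1 + a²(1+γ²)), and its median equals η = γ/√(1+γ²), independently of a. -/
open MeasureTheory

/-- Distribution function of the Student `t` distribution with 3 degrees of freedom. -/
noncomputable def t3cdf (x : ℝ) : ℝ :=
  1 / 2 + (1 / Real.pi) * ((x / Real.sqrt 3) / (1 + x ^ 2 / 3) + Real.arctan (x / Real.sqrt 3))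

/-- Density of the canonical bivariate skew-Cauchy distribution `CSC₂(γ)`,
i.e. the bivariate skew-`t` with `ν = 1`, `ξ = 0`, `Ω = I₂`, skewness `γe₁`. -/
noncomputable def csc2Pdf (γ : ℝ) (x z : ℝ) : ℝ :=
  2 * ((1 / (2 * Real.pi)) * (1 + x ^ 2 + z ^ 2) ^ (-(3 : ℝ) / 2)) *
    t3cdf (γ * x * Real.sqrt (3 / (x ^ 2 + z ^ 2 + 1)))

/-- Density of the univariate skew-Cauchy distribution `SC₁(ξ, ω², γ)`
(the skew-`t` density with `ν = 1`). -/
noncomputable def scPdf (ξ ω γ y : ℝ) : ℝ :=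
  (2 / ω) * (1 / (Real.pi * (1 + ((y - ξ) / ω) ^ 2))) *
    (1 / 2 + (γ * ((y - ξ) / ω) * Real.sqrt (2 / (1 + ((y - ξ) / ω) ^ 2))) /
      (2 * Real.sqrt (2 + (γ * ((y - ξ) / ω) * Real.sqrt (2 / (1 + ((y - ξ) / ω) ^ 2))) ^ 2)))

open Filter Topology

lemma aux_Iic {F f : ℝ → ℝ} {m b : ℝ} (hd : ∀ x, HasDerivAt F (f x) x) (h0 : ∀ x, 0 ≤ f x)
    (hb : Tendsto F atBot (𝓝 m)) : IntegrableOn f (Set.Iic b) := by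
  have h1 : IntegrableOn (fun x => f (-x)) (Set.Ioi (-b)) := by
    refine integrableOn_Ioi_deriv_of_nonneg' (g := fun x => - F (-x)) (l := -m) ?_
      (fun x _ => h0 _) ?_
    · intro x _
      have h : HasDerivAt (fun x => -F (-x)) (-(f (-x) * -1)) x :=
        ((hd (-x)).comp x (hasDerivAt_neg x)).neg
      convert h using 1
      ring
    · exact (hb.comp tendsto_neg_atTop_atBot).neg
  have h2 := (integrableOn_Iic_iff_integrableOn_Iio (f := f) (b := b) (μ := volume))
  rw [h2]
  have := h1.comp_neg
  simpa using this

lemma aux_lint_Iic {F f : ℝ → ℝ} {m : ℝ} (b : ℝ) (hd : ∀ x, HasDerivAt F (f x) x)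
    (h0 : ∀ x, 0 ≤ f x) (hb : Tendsto F atBot (𝓝 m)) :
    ∫⁻ x in Set.Iic b, ENNReal.ofReal (f x) = ENNReal.ofReal (F b - m) := by
  have hi := aux_Iic (b := b) hd h0 hb
  rw [← integral_Iic_of_hasDerivAt_of_tendsto' (fun x _ => hd x) hi hb,
    ofReal_integral_eq_lintegral_ofReal hi (ae_of_all _ h0)]

lemma aux_lint {F f : ℝ → ℝ} {m n : ℝ} (hd : ∀ x, HasDerivAt F (f x) x)
    (h0 : ∀ x, 0 ≤ f x) (hb : Tendsto F atBot (𝓝 m)) (ht : Tendsto F atTop (𝓝 n)) :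
    ∫⁻ x, ENNReal.ofReal (f x) = ENNReal.ofReal (n - m) := by
  have hi : Integrable f := by
    rw [← integrableOn_univ, ← Set.Iic_union_Ioi (a := (0:ℝ))]
    exact (aux_Iic hd h0 hb).union
      (integrableOn_Ioi_deriv_of_nonneg' (fun x _ => hd x) (fun x _ => h0 x) ht)
  rw [← integral_of_hasDerivAt_of_tendsto hd hi hb ht,
    ofReal_integral_eq_lintegral_ofReal hi (ae_of_all _ h0)]

lemma t3cdf_eq (s : ℝ) : t3cdf (s * √3) = 1 / 2 + (1 / Real.pi) * (s / (1 + s ^ 2) + Real.arctan s) := by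
  have h3 : (√3:ℝ) ≠ 0 := by positivity
  have : (s * √3) ^ 2 / 3 = s ^ 2 := by
    rw [mul_pow, Real.sq_sqrt (by norm_num)]; ring
  rw [t3cdf, this, mul_div_cancel_right₀ _ h3]

lemma t3_nonneg (s : ℝ) : 0 ≤ 1 / 2 + (1 / Real.pi) * (s / (1 + s ^ 2) + Real.arctan s) := by
  have h1 : s / (1 + s ^ 2) = Real.sin (2 * Real.arctan s) / 2 := by
    rw [Real.sin_two_mul, Real.sin_arctan, Real.cos_arctan]
    have : 0 < 1 + s ^ 2 := by positivity
    field_simp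
    rw [Real.sq_sqrt this.le]
  have h2 := Real.neg_pi_div_two_lt_arctan s
  have h3 := Real.sin_le (x := 2 * Real.arctan s + Real.pi) (by linarith)
  rw [Real.sin_add_pi] at h3
  rw [h1]
  have hp := Real.pi_pos
  have : 0 ≤ (1 / Real.pi) * (Real.pi / 2 + (Real.sin (2 * Real.arctan s) / 2 + Real.arctan s)) := by
    apply mul_nonneg (by positivity); linarith
  rw [mul_add] at this
  have e : 1 / Real.pi * (Real.pi / 2) = 1 / 2 := by field_simp
  linarith

lemma csc2_eq (γ x z : ℝ) : csc2Pdf γ x z = (1 / Real.pi) * (1 / √(1 + x ^ 2 + z ^ 2) ^ 3) *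
    (1 / 2 + (1 / Real.pi) * ((γ * x / √(1 + x ^ 2 + z ^ 2)) / (1 + (γ * x / √(1 + x ^ 2 + z ^ 2)) ^ 2)
      + Real.arctan (γ * x / √(1 + x ^ 2 + z ^ 2)))) := by
  have hQ : 0 < 1 + x ^ 2 + z ^ 2 := by positivity
  have e1 : γ * x * √(3 / (x ^ 2 + z ^ 2 + 1)) = (γ * x / √(1 + x ^ 2 + z ^ 2)) * √3 := by
    rw [Real.sqrt_div (by norm_num), show x ^ 2 + z ^ 2 + 1 = 1 + x ^ 2 + z ^ 2 by ring]; ring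
  have e2 : (1 + x ^ 2 + z ^ 2) ^ (-(3 : ℝ) / 2) = 1 / √(1 + x ^ 2 + z ^ 2) ^ 3 := by
    rw [Real.sqrt_eq_rpow, ← Real.rpow_natCast (_ ^ (1 / 2 : ℝ)), ← Real.rpow_mul hQ.le, one_div, ← Real.rpow_neg hQ.le]
    norm_num
  rw [csc2Pdf, e1, e2, t3cdf_eq]
  have := Real.pi_pos
  field_simp

lemma csc2_nonneg (γ x z : ℝ) : 0 ≤ csc2Pdf γ x z := by
  rw [csc2_eq]
  have := Real.pi_pos
  exact mul_nonneg (by positivity) (t3_nonneg _)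

lemma csc2_meas (γ : ℝ) : Measurable (fun p : ℝ × ℝ => csc2Pdf γ p.1 p.2) := by
  simp only [csc2_eq]
  fun_prop

lemma scPdf_eq (γ a y : ℝ) : scPdf 0 √(1 + a ^ 2) (γ / √(1 + a ^ 2 * (1 + γ ^ 2))) y =
    (1 / Real.pi) * (√(1 + a ^ 2) / (1 + a ^ 2 + y ^ 2) + γ * y /
      ((1 + a ^ 2 + y ^ 2) * √(1 + a ^ 2 * (1 + γ ^ 2) + (1 + γ ^ 2) * y ^ 2))) := by
  have hW : 0 < 1 + a ^ 2 := by positivity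
  have hC : 0 < 1 + a ^ 2 * (1 + γ ^ 2) := by positivity
  have hD : 0 < 1 + a ^ 2 * (1 + γ ^ 2) + (1 + γ ^ 2) * y ^ 2 := by positivity
  have hpi := Real.pi_pos
  set w := √(1 + a ^ 2) with hw
  set k := √(1 + a ^ 2 * (1 + γ ^ 2)) with hk
  set D := √(1 + a ^ 2 * (1 + γ ^ 2) + (1 + γ ^ 2) * y ^ 2) with hDD
  have w0 : 0 < w := Real.sqrt_pos.2 hW
  have k0 : 0 < k := Real.sqrt_pos.2 hC
  have D0 : 0 < D := Real.sqrt_pos.2 hD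
  have w2 : w ^ 2 = 1 + a ^ 2 := Real.sq_sqrt hW.le
  have k2 : k ^ 2 = 1 + a ^ 2 * (1 + γ ^ 2) := Real.sq_sqrt hC.le
  have D2 : D ^ 2 = 1 + a ^ 2 * (1 + γ ^ 2) + (1 + γ ^ 2) * y ^ 2 := Real.sq_sqrt hD.le
  have hP : 0 < w ^ 2 + y ^ 2 := by positivity
  have e1 : √(2 / (1 + ((y - 0) / w) ^ 2)) = √2 * w / √(w ^ 2 + y ^ 2) := by
    rw [show 2 / (1 + ((y - 0) / w) ^ 2) = 2 * w ^ 2 / (w ^ 2 + y ^ 2) by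
      rw [sub_zero]; field_simp]
    rw [Real.sqrt_div (by positivity), Real.sqrt_mul (by norm_num), Real.sqrt_sq w0.le]
  rw [scPdf, e1]
  set p := √(w ^ 2 + y ^ 2) with hp
  have p0 : 0 < p := Real.sqrt_pos.2 hP
  have p2 : p ^ 2 = w ^ 2 + y ^ 2 := Real.sq_sqrt hP.le
  have s2 : √2 ^ 2 = (2:ℝ) := Real.sq_sqrt (by norm_num)
  have e2 : √(2 + (γ / k * ((y - 0) / w) * (√2 * w / p)) ^ 2) = √2 * (D * w / (k * p)) := by
    rw [show 2 + (γ / k * ((y - 0) / w) * (√2 * w / p)) ^ 2 = 2 * (D * w / (k * p)) ^ 2 by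
      rw [sub_zero]
      field_simp
      rw [s2, p2, k2, D2, w2]; ring]
    rw [Real.sqrt_mul (by norm_num), Real.sqrt_sq (by positivity)]
  rw [e2, ← w2]
  have s0 : 0 < √(2:ℝ) := by positivity
  rw [sub_zero]
  field_simp

/-- Antiderivative in `z` of `csc2Pdf γ (y - a z) z`. -/
noncomputable def auxG (γ a y z : ℝ) : ℝ :=
  (1 / Real.pi) * (((1 + a ^ 2) * z - a * y) / √(1 + (y - a * z) ^ 2 + z ^ 2) / (1 + a ^ 2 + y ^ 2) *
      (1 / 2 + (1 / Real.pi) * Real.arctan (γ * (y - a * z) / √(1 + (y - a * z) ^ 2 + z ^ 2)))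
    + γ * y / (Real.pi * (1 + a ^ 2 + y ^ 2) * √(1 + a ^ 2 * (1 + γ ^ 2) + (1 + γ ^ 2) * y ^ 2)) *
      Real.arctan (((1 + a ^ 2 * (1 + γ ^ 2)) * z - a * (1 + γ ^ 2) * y) /
        √(1 + a ^ 2 * (1 + γ ^ 2) + (1 + γ ^ 2) * y ^ 2)))

lemma auxG_deriv (γ a y z : ℝ) : HasDerivAt (auxG γ a y) (csc2Pdf γ (y - a * z) z) z := by
  have hQ : 0 < 1 + (y - a * z) ^ 2 + z ^ 2 := by positivity
  have hD : 0 < 1 + a ^ 2 * (1 + γ ^ 2) + (1 + γ ^ 2) * y ^ 2 := by positivity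
  have hP : 0 < 1 + a ^ 2 + y ^ 2 := by positivity
  have hpi := Real.pi_pos
  have hr : HasDerivAt (fun z => √(1 + (y - a * z) ^ 2 + z ^ 2))
      (((1 + a ^ 2) * z - a * y) / √(1 + (y - a * z) ^ 2 + z ^ 2)) z := by
    have h1 : HasDerivAt (fun z : ℝ => 1 + (y - a * z) ^ 2 + z ^ 2)
        (2 * ((1 + a ^ 2) * z - a * y)) z := by
      have hx : HasDerivAt (fun z : ℝ => y - a * z) (-(a * 1)) z :=
        ((hasDerivAt_id z).const_mul a).const_sub y
      refine HasDerivAt.congr_deriv (f := fun z : ℝ => 1 + (y - a * z) ^ 2 + z ^ 2)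
        (((hx.pow 2).const_add 1).add ((hasDerivAt_id z).pow 2)) ?_
      simp only [id]
      push_cast
      ring
    convert h1.sqrt hQ.ne' using 1
    field_simp
  have hx : HasDerivAt (fun z : ℝ => γ * (y - a * z)) (γ * -(a * 1)) z :=
    (((hasDerivAt_id z).const_mul a).const_sub y).const_mul γ
  have hL : HasDerivAt (fun z : ℝ => (1 + a ^ 2) * z - a * y) ((1 + a ^ 2) * 1) z :=
    ((hasDerivAt_id z).const_mul _).sub_const _
  have hM : HasDerivAt (fun z : ℝ => ((1 + a ^ 2 * (1 + γ ^ 2)) * z - a * (1 + γ ^ 2) * y) /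
        √(1 + a ^ 2 * (1 + γ ^ 2) + (1 + γ ^ 2) * y ^ 2))
        (((1 + a ^ 2 * (1 + γ ^ 2)) * 1) / √(1 + a ^ 2 * (1 + γ ^ 2) + (1 + γ ^ 2) * y ^ 2)) z :=
    (((hasDerivAt_id z).const_mul _).sub_const _).div_const _
  have r0 := Real.sqrt_pos.2 hQ
  have r2 := Real.sq_sqrt hQ.le
  have D0 := Real.sqrt_pos.2 hD
  have D2 := Real.sq_sqrt hD.le
  have main := ((((hL.div hr r0.ne').div_const (1 + a ^ 2 + y ^ 2)).mul
    (((hx.div hr r0.ne').arctan.const_mul (1 / Real.pi)).const_add (1 / 2))).add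
    (hM.arctan.const_mul (γ * y / (Real.pi * (1 + a ^ 2 + y ^ 2) *
      √(1 + a ^ 2 * (1 + γ ^ 2) + (1 + γ ^ 2) * y ^ 2))))).const_mul (1 / Real.pi)
  refine HasDerivAt.congr_deriv (f := auxG γ a y) main ?_
  rw [csc2_eq]
  simp only [Pi.div_apply]
  set r := √(1 + (y - a * z) ^ 2 + z ^ 2) with hrdef
  set D := √(1 + a ^ 2 * (1 + γ ^ 2) + (1 + γ ^ 2) * y ^ 2) with hDdef
  generalize hA : Real.arctan (γ * (y - a * z) / r) = A
  clear_value r D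
  have hq : 0 < r ^ 2 + (γ * (y - a * z)) ^ 2 := by positivity
  have hC : 0 < 1 + a ^ 2 * (1 + γ ^ 2) := by positivity
  -- individual simplifications
  have f1 : ((1 + a ^ 2) * 1 * r - ((1 + a ^ 2) * z - a * y) * (((1 + a ^ 2) * z - a * y) / r)) / r ^ 2
      / (1 + a ^ 2 + y ^ 2) = 1 / r ^ 3 := by
    field_simp
    rw [r2]; ring
  have f2 : 1 / (1 + (γ * (y - a * z) / r) ^ 2) * ((γ * -(a * 1) * r - γ * (y - a * z) *
      (((1 + a ^ 2) * z - a * y) / r)) / r ^ 2) =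
      - γ * (a + y * z) / (r * (r ^ 2 + (γ * (y - a * z)) ^ 2)) := by
    have : 1 + (γ * (y - a * z) / r) ^ 2 = (r ^ 2 + (γ * (y - a * z)) ^ 2) / r ^ 2 := by
      field_simp
    rw [this]
    have : (γ * -(a * 1) * r - γ * (y - a * z) * (((1 + a ^ 2) * z - a * y) / r)) =
       - γ * (a + y * z) / r := by
      field_simp
      rw [r2]; ring
    rw [this]
    field_simp
  have f3 : 1 / (1 + (((1 + a ^ 2 * (1 + γ ^ 2)) * z - a * (1 + γ ^ 2) * y) / D) ^ 2) *
      ((1 + a ^ 2 * (1 + γ ^ 2)) * 1 / D) = D / (r ^ 2 + (γ * (y - a * z)) ^ 2) := by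
    have : 1 + (((1 + a ^ 2 * (1 + γ ^ 2)) * z - a * (1 + γ ^ 2) * y) / D) ^ 2 =
      (1 + a ^ 2 * (1 + γ ^ 2)) * (r ^ 2 + (γ * (y - a * z)) ^ 2) / D ^ 2 := by
      field_simp
      rw [D2, r2]; ring
    rw [this]
    field_simp
  have f4 : γ * (y - a * z) / r / (1 + (γ * (y - a * z) / r) ^ 2) =
      γ * (y - a * z) * r / (r ^ 2 + (γ * (y - a * z)) ^ 2) := by
    have : 1 + (γ * (y - a * z) / r) ^ 2 = (r ^ 2 + (γ * (y - a * z)) ^ 2) / r ^ 2 := by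
      field_simp
    rw [this]
    field_simp
  rw [f1, f2, f3, f4]
  generalize hqq : r ^ 2 + (γ * (y - a * z)) ^ 2 = q at *
  have key : γ * y * r ^ 2 - ((1 + a ^ 2) * z - a * y) * (γ * (a + y * z)) =
      γ * (y - a * z) * (1 + a ^ 2 + y ^ 2) := by
    rw [r2]; ring
  field_simp
  linear_combination (2 * r) * key

lemma auxG_tendsto (γ a y : ℝ) {l : Filter ℝ} {e : ℝ} (he : e = 1 ∨ e = -1)
    (hl : ∀ c d : ℝ, 0 < c → Tendsto (fun z => Real.arctan (c * z + d)) l (𝓝 (e * (Real.pi / 2)))) :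
    Tendsto (auxG γ a y) l (𝓝 ((1 / Real.pi) * (e * (√(1 + a ^ 2) / (1 + a ^ 2 + y ^ 2)) *
      (1 / 2 + (1 / Real.pi) * Real.arctan (- (e * γ * a / √(1 + a ^ 2))))
    + γ * y / (Real.pi * (1 + a ^ 2 + y ^ 2) * √(1 + a ^ 2 * (1 + γ ^ 2) + (1 + γ ^ 2) * y ^ 2)) *
      (e * (Real.pi / 2))))) := by
  have hD : 0 < 1 + a ^ 2 * (1 + γ ^ 2) + (1 + γ ^ 2) * y ^ 2 := by positivity
  have hP : 0 < 1 + a ^ 2 + y ^ 2 := by positivity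
  have hW : 0 < 1 + a ^ 2 := by positivity
  have D0 := Real.sqrt_pos.2 hD
  have P0 := Real.sqrt_pos.2 hP
  have W0 := Real.sqrt_pos.2 hW
  have P2 := Real.sq_sqrt hP.le
  have W2 := Real.sq_sqrt hW.le
  -- the angle
  let φ : ℝ → ℝ := fun z => (1 + a ^ 2) / √(1 + a ^ 2 + y ^ 2) * z + -(a * y / √(1 + a ^ 2 + y ^ 2))
  have hφ := hl ((1 + a ^ 2) / √(1 + a ^ 2 + y ^ 2)) (-(a * y / √(1 + a ^ 2 + y ^ 2))) (by positivity)
  have hsin : Tendsto (fun z => Real.sin (Real.arctan (φ z))) l (𝓝 e) := by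
    have := (Real.continuous_sin.tendsto _).comp hφ
    have h2 : Real.sin (e * (Real.pi / 2)) = e := by
      rcases he with rfl | rfl <;> simp
    rwa [h2] at this
  have hcos : Tendsto (fun z => Real.cos (Real.arctan (φ z))) l (𝓝 0) := by
    have := (Real.continuous_cos.tendsto _).comp hφ
    have h2 : Real.cos (e * (Real.pi / 2)) = 0 := by
      rcases he with rfl | rfl <;> simp
    rwa [h2] at this
  have hr : ∀ z, √(1 + (φ z) ^ 2) =
      √(1 + a ^ 2) * √(1 + (y - a * z) ^ 2 + z ^ 2) / √(1 + a ^ 2 + y ^ 2) := by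
    intro z
    rw [← Real.sqrt_mul hW.le, ← Real.sqrt_div (by positivity)]
    congr 1
    have : φ z = ((1 + a ^ 2) * z - a * y) / √(1 + a ^ 2 + y ^ 2) := by
      simp only [φ]; ring
    rw [this, div_pow, P2]
    field_simp
    ring
  have hLr : ∀ z, ((1 + a ^ 2) * z - a * y) / √(1 + (y - a * z) ^ 2 + z ^ 2) =
      √(1 + a ^ 2) * Real.sin (Real.arctan (φ z)) := by
    intro z
    have r0 : 0 < √(1 + (y - a * z) ^ 2 + z ^ 2) := by positivity
    rw [Real.sin_arctan, hr]
    simp only [φ]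
    field_simp
    ring
  have hs : ∀ z, γ * (y - a * z) / √(1 + (y - a * z) ^ 2 + z ^ 2) =
      γ / (1 + a ^ 2) * (y * (√(1 + a ^ 2) / √(1 + a ^ 2 + y ^ 2) * Real.cos (Real.arctan (φ z))) -
        a * (√(1 + a ^ 2) * Real.sin (Real.arctan (φ z)))) := by
    intro z
    have r0 : 0 < √(1 + (y - a * z) ^ 2 + z ^ 2) := by positivity
    rw [← hLr, Real.cos_arctan, hr]
    field_simp
    ring
  have hM := hl ((1 + a ^ 2 * (1 + γ ^ 2)) / √(1 + a ^ 2 * (1 + γ ^ 2) + (1 + γ ^ 2) * y ^ 2))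
    (-(a * (1 + γ ^ 2) * y / √(1 + a ^ 2 * (1 + γ ^ 2) + (1 + γ ^ 2) * y ^ 2))) (by positivity)
  have hs' : Tendsto (fun z => γ * (y - a * z) / √(1 + (y - a * z) ^ 2 + z ^ 2)) l
      (𝓝 (- (e * γ * a / √(1 + a ^ 2)))) := by
    simp only [hs]
    have := ((((hcos.const_mul (√(1 + a ^ 2) / √(1 + a ^ 2 + y ^ 2))).const_mul y).sub
      ((hsin.const_mul √(1 + a ^ 2)).const_mul a)).const_mul (γ / (1 + a ^ 2)))
    convert this using 2
    field_simp
    linear_combination (a * e * γ * √(1 + a ^ 2 + y ^ 2)) * W2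
  have hA := (Real.continuous_arctan.tendsto _).comp hs'
  have hL' : Tendsto (fun z => ((1 + a ^ 2) * z - a * y) / √(1 + (y - a * z) ^ 2 + z ^ 2)) l
      (𝓝 (√(1 + a ^ 2) * e)) := by
    simp only [hLr]
    exact hsin.const_mul _
  have main := (((hL'.div_const (1 + a ^ 2 + y ^ 2)).mul ((hA.const_mul (1 / Real.pi)).const_add (1/2))).add
    (hM.const_mul (γ * y / (Real.pi * (1 + a ^ 2 + y ^ 2) *
      √(1 + a ^ 2 * (1 + γ ^ 2) + (1 + γ ^ 2) * y ^ 2))))).const_mul (1 / Real.pi)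
  convert main using 2
  · simp only [auxG, Function.comp]
    congr 5
    ring
  · ring

lemma csc2_marg (γ a y : ℝ) : ∫⁻ z, ENNReal.ofReal (csc2Pdf γ (y - a * z) z) =
    ENNReal.ofReal (scPdf 0 √(1 + a ^ 2) (γ / √(1 + a ^ 2 * (1 + γ ^ 2))) y) := by
  have ht := auxG_tendsto γ a y (l := atTop) (e := 1) (Or.inl rfl) (by
    intro c d hc
    have h : Tendsto (fun z : ℝ => c * z + d) atTop atTop :=
      tendsto_atTop_add_const_right _ _ (tendsto_id.const_mul_atTop hc)
    simpa [Function.comp_def] using (tendsto_nhds_of_tendsto_nhdsWithin Real.tendsto_arctan_atTop).comp h)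
  have hb := auxG_tendsto γ a y (l := atBot) (e := -1) (Or.inr rfl) (by
    intro c d hc
    have h : Tendsto (fun z : ℝ => c * z + d) atBot atBot :=
      tendsto_atBot_add_const_right _ _ (tendsto_id.const_mul_atBot hc)
    simpa [Function.comp_def] using (tendsto_nhds_of_tendsto_nhdsWithin Real.tendsto_arctan_atBot).comp h)
  rw [aux_lint (auxG_deriv γ a y) (fun z => csc2_nonneg _ _ _) hb ht, scPdf_eq]
  congr 1
  have e1 : Real.arctan (-(-1 * γ * a / √(1 + a ^ 2))) = Real.arctan (γ * a / √(1 + a ^ 2)) := by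
    congr 1; ring
  rw [e1, one_mul, Real.arctan_neg]
  have hD : 0 < 1 + a ^ 2 * (1 + γ ^ 2) + (1 + γ ^ 2) * y ^ 2 := by positivity
  have D0 := Real.sqrt_pos.2 hD
  have hP : 0 < 1 + a ^ 2 + y ^ 2 := by positivity
  have hpi := Real.pi_pos
  field_simp
  ring

/-- Antiderivative of the skew-Cauchy density. -/
noncomputable def auxF (γ a y : ℝ) : ℝ :=
  (1 / Real.pi) * (Real.arctan (y / √(1 + a ^ 2)) -
    Real.arctan (γ / √(1 + a ^ 2 * (1 + γ ^ 2) + (1 + γ ^ 2) * y ^ 2)))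

lemma scPdf_nonneg (γ a y : ℝ) :
    0 ≤ scPdf 0 √(1 + a ^ 2) (γ / √(1 + a ^ 2 * (1 + γ ^ 2))) y := by
  rw [scPdf_eq]
  have hD : 0 < 1 + a ^ 2 * (1 + γ ^ 2) + (1 + γ ^ 2) * y ^ 2 := by positivity
  have hW : 0 < 1 + a ^ 2 := by positivity
  have D0 := Real.sqrt_pos.2 hD
  have D2 := Real.sq_sqrt hD.le
  have W0 := Real.sqrt_pos.2 hW
  have W2 := Real.sq_sqrt hW.le
  have hP : 0 < 1 + a ^ 2 + y ^ 2 := by positivity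
  have hpi := Real.pi_pos
  apply mul_nonneg (by positivity)
  rw [show √(1 + a ^ 2) / (1 + a ^ 2 + y ^ 2) + γ * y /
      ((1 + a ^ 2 + y ^ 2) * √(1 + a ^ 2 * (1 + γ ^ 2) + (1 + γ ^ 2) * y ^ 2)) =
      (√(1 + a ^ 2) * √(1 + a ^ 2 * (1 + γ ^ 2) + (1 + γ ^ 2) * y ^ 2) + γ * y) /
      ((1 + a ^ 2 + y ^ 2) * √(1 + a ^ 2 * (1 + γ ^ 2) + (1 + γ ^ 2) * y ^ 2)) by field_simp]
  apply div_nonneg _ (by positivity)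
  have : |γ * y| ≤ √(1 + a ^ 2) * √(1 + a ^ 2 * (1 + γ ^ 2) + (1 + γ ^ 2) * y ^ 2) := by
    refine abs_le_of_sq_le_sq ?_ (by positivity)
    rw [mul_pow √(1 + a ^ 2), W2, D2]
    have : (1 + a ^ 2) * (1 + a ^ 2 * (1 + γ ^ 2) + (1 + γ ^ 2) * y ^ 2) = (γ * y) ^ 2 +
      ((1 + a ^ 2) * (1 + a ^ 2 * (1 + γ ^ 2)) + y ^ 2 + a ^ 2 * (1 + γ ^ 2) * y ^ 2) := by ring
    rw [this]
    have : 0 ≤ ((1 + a ^ 2) * (1 + a ^ 2 * (1 + γ ^ 2)) + y ^ 2 + a ^ 2 * (1 + γ ^ 2) * y ^ 2) := by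
      positivity
    linarith
  linarith [(abs_le.1 this).1]

lemma auxF_deriv (γ a y : ℝ) : HasDerivAt (auxF γ a)
    (scPdf 0 √(1 + a ^ 2) (γ / √(1 + a ^ 2 * (1 + γ ^ 2))) y) y := by
  rw [scPdf_eq]
  have hD : 0 < 1 + a ^ 2 * (1 + γ ^ 2) + (1 + γ ^ 2) * y ^ 2 := by positivity
  have hW : 0 < 1 + a ^ 2 := by positivity
  have D0 := Real.sqrt_pos.2 hD
  have D2 := Real.sq_sqrt hD.le
  have W0 := Real.sqrt_pos.2 hW
  have W2 := Real.sq_sqrt hW.le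
  have hP : 0 < 1 + a ^ 2 + y ^ 2 := by positivity
  have hpi := Real.pi_pos
  have h1 : HasDerivAt (fun y : ℝ => √(1 + a ^ 2 * (1 + γ ^ 2) + (1 + γ ^ 2) * y ^ 2))
      ((1 + γ ^ 2) * y / √(1 + a ^ 2 * (1 + γ ^ 2) + (1 + γ ^ 2) * y ^ 2)) y := by
    have h1 : HasDerivAt (fun y : ℝ => 1 + a ^ 2 * (1 + γ ^ 2) + (1 + γ ^ 2) * y ^ 2)
        (2 * ((1 + γ ^ 2) * y)) y := by
      refine HasDerivAt.congr_deriv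
        (f := fun y : ℝ => 1 + a ^ 2 * (1 + γ ^ 2) + (1 + γ ^ 2) * y ^ 2)
        ((((hasDerivAt_id y).pow 2).const_mul (1 + γ ^ 2)).const_add (1 + a ^ 2 * (1 + γ ^ 2))) ?_
      simp only [id]
      push_cast
      ring
    convert h1.sqrt hD.ne' using 1
    field_simp
  have main := ((((hasDerivAt_id y).div_const √(1 + a ^ 2)).arctan).sub
    (((hasDerivAt_const y γ).div h1 D0.ne').arctan)).const_mul (1 / Real.pi)
  refine HasDerivAt.congr_deriv (f := auxF γ a) main ?_
  simp only [Pi.div_apply, id]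
  set w := √(1 + a ^ 2)
  set D := √(1 + a ^ 2 * (1 + γ ^ 2) + (1 + γ ^ 2) * y ^ 2)
  clear_value w D
  have f1 : 1 / (1 + (y / w) ^ 2) * (1 / w) = w / (1 + a ^ 2 + y ^ 2) := by
    rw [← W2]; field_simp
  have f2 : 1 + (γ / D) ^ 2 = (1 + γ ^ 2) * (1 + a ^ 2 + y ^ 2) / D ^ 2 := by
    field_simp
    rw [D2]; ring
  rw [f1, f2]
  field_simp
  ring

lemma auxF_tendsto (γ a : ℝ) : Tendsto (auxF γ a) atBot (𝓝 (-(1 / 2))) := by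
  have hpi := Real.pi_pos
  have hW : 0 < √(1 + a ^ 2) := by positivity
  have h1 : Tendsto (fun y : ℝ => Real.arctan (y / √(1 + a ^ 2))) atBot (𝓝 (-(Real.pi / 2))) :=
    (tendsto_nhds_of_tendsto_nhdsWithin Real.tendsto_arctan_atBot).comp
      (tendsto_id.atBot_div_const hW)
  have h2 : Tendsto (fun y : ℝ => √(1 + a ^ 2 * (1 + γ ^ 2) + (1 + γ ^ 2) * y ^ 2)) atBot atTop := by
    have hsq : Tendsto (fun y : ℝ => y ^ 2) atBot atTop := by
      have := (tendsto_pow_atTop (α := ℝ) two_ne_zero).comp tendsto_neg_atBot_atTop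
      simpa [Function.comp_def] using this
    refine Real.tendsto_sqrt_atTop.comp (tendsto_atTop_add_const_left _ _ ?_)
    exact hsq.const_mul_atTop (by positivity)
  have h3 := (Real.continuous_arctan.tendsto _).comp (h2.const_div_atTop γ)
  have := (h1.sub h3).const_mul (1 / Real.pi)
  refine Tendsto.congr' (Eventually.of_forall fun y => rfl) (this.trans_eq ?_)
  simp
  field_simp

lemma auxF_median (γ a : ℝ) : auxF γ a (γ / √(1 + γ ^ 2)) = 0 := by
  have hc : 0 < 1 + γ ^ 2 := by positivity
  have hW : 0 < 1 + a ^ 2 := by positivity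
  have e : 1 + a ^ 2 * (1 + γ ^ 2) + (1 + γ ^ 2) * (γ / √(1 + γ ^ 2)) ^ 2 =
      (1 + γ ^ 2) * (1 + a ^ 2) := by
    rw [div_pow, Real.sq_sqrt hc.le]
    field_simp
    ring
  rw [auxF, e, Real.sqrt_mul hc.le, div_div]
  simp

/-- If `(X, Z) ∼ CSC₂(γ)`, then for any `a ∈ ℝ` the variable `Y_a = X + aZ` has
distribution `SC₁(0, 1 + a², γ_a)` with `γ_a = γ/√(1 + a²(1+γ²))`, and its median is
`η = γ/√(1+γ²)`, independently of `a`. -/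
theorem csc2_linear_form_and_median {Ω : Type*} [MeasureSpace Ω]
    [IsProbabilityMeasure (volume : Measure Ω)]
    (γ : ℝ) (X Z : Ω → ℝ) (hX : Measurable X) (hZ : Measurable Z)
    (hlaw : Measure.map (fun ω => (X ω, Z ω)) volume =
      (volume : Measure (ℝ × ℝ)).withDensity fun p => ENNReal.ofReal (csc2Pdf γ p.1 p.2)) :
    ∀ a : ℝ,
      Measure.map (fun ω => X ω + a * Z ω) volume =
        (volume : Measure ℝ).withDensity (fun y =>
          ENNReal.ofReal (scPdf 0 (Real.sqrt (1 + a ^ 2))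
            (γ / Real.sqrt (1 + a ^ 2 * (1 + γ ^ 2))) y)) ∧
      (volume {ω | X ω + a * Z ω ≤ γ / Real.sqrt (1 + γ ^ 2)}).toReal = 1 / 2 := by
  intro a
  have hYm : Measurable (fun ω => X ω + a * Z ω) := hX.add (hZ.const_mul a)
  have hlin : Measurable (fun p : ℝ × ℝ => p.1 + a * p.2) := by fun_prop
  have key : Measure.map (fun ω => X ω + a * Z ω) volume =
        (volume : Measure ℝ).withDensity (fun y =>
          ENNReal.ofReal (scPdf 0 (Real.sqrt (1 + a ^ 2))
            (γ / Real.sqrt (1 + a ^ 2 * (1 + γ ^ 2))) y)) := by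
    have hcomp : (fun ω => X ω + a * Z ω) = (fun p : ℝ × ℝ => p.1 + a * p.2) ∘
      (fun ω => (X ω, Z ω)) := rfl
    rw [hcomp, ← Measure.map_map hlin (hX.prodMk hZ), hlaw]
    ext s hs
    have hf : Measurable (fun p : ℝ × ℝ => ENNReal.ofReal (csc2Pdf γ p.1 p.2)) :=
      (csc2_meas γ).ennreal_ofReal
    rw [Measure.map_apply hlin hs, withDensity_apply _ (hlin hs), withDensity_apply _ hs,
      ← lintegral_indicator (hlin hs), Measure.volume_eq_prod,
      lintegral_prod_symm' _ (hf.indicator (hlin hs)), ← lintegral_indicator hs]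
    have hshift : ∀ z : ℝ, ∫⁻ x, ((fun p : ℝ × ℝ => p.1 + a * p.2) ⁻¹' s).indicator
        (fun p : ℝ × ℝ => ENNReal.ofReal (csc2Pdf γ p.1 p.2)) (x, z) =
        ∫⁻ y, s.indicator (fun y => ENNReal.ofReal (csc2Pdf γ (y - a * z) z)) y := by
      intro z
      rw [← lintegral_sub_right_eq_self _ (a * z)]
      refine lintegral_congr fun y => ?_
      by_cases hy : y ∈ s <;> simp [Set.indicator, hy]
    simp only [hshift]
    have hm2 : Measurable (Function.uncurry fun z y : ℝ =>
        s.indicator (fun y => ENNReal.ofReal (csc2Pdf γ (y - a * z) z)) y) := by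
      have h1 : Measurable (fun q : ℝ × ℝ => ENNReal.ofReal (csc2Pdf γ (q.2 - a * q.1) q.1)) :=
        hf.comp (g := fun p : ℝ × ℝ => ENNReal.ofReal (csc2Pdf γ p.1 p.2))
          (f := fun q : ℝ × ℝ => (q.2 - a * q.1, q.1)) (by fun_prop)
      exact h1.indicator (measurable_snd hs)
    rw [lintegral_lintegral_swap hm2.aemeasurable]
    refine lintegral_congr fun y => ?_
    by_cases hy : y ∈ s
    · simp only [Set.indicator_of_mem hy]
      exact csc2_marg γ a y
    · simp [Set.indicator_of_notMem hy]
  refine ⟨key, ?_⟩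
  have h1 : volume {ω | X ω + a * Z ω ≤ γ / Real.sqrt (1 + γ ^ 2)} =
      Measure.map (fun ω => X ω + a * Z ω) volume (Set.Iic (γ / Real.sqrt (1 + γ ^ 2))) := by
    rw [Measure.map_apply hYm measurableSet_Iic]; rfl
  rw [h1, key, withDensity_apply _ measurableSet_Iic,
    aux_lint_Iic _ (auxF_deriv γ a) (scPdf_nonneg γ a) (auxF_tendsto γ a), auxF_median]
  norm_num
end

section
/- If X ∼ CSC_d(γ) is a canonical skew-Cauchy vector such that for every unit vector u ∈ ℝ^d, P(uᵀX ≤ u₁·η) = 1/2 where η = γ/√(1+γ²), then X is angularly symmetric about the point (η, 0, …, 0), and HD_X((η,0,…,0)) = 1/2. -/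
open MeasureTheory

/-- Half-space depth. -/
noncomputable def HD {d : ℕ} (μ : Measure (Fin d → ℝ)) (x : Fin d → ℝ) : ℝ :=
  ⨅ u : {u : Fin d → ℝ // ∑ i, (u i) ^ 2 = 1},
    (μ {y | ∑ i, u.1 i * y i ≤ ∑ i, u.1 i * x i}).toReal

/-- Euclidean-normalized direction of a vector in `ℝ^d`. -/
noncomputable def dir {d : ℕ} (v : Fin d → ℝ) : Fin d → ℝ :=
  (Real.sqrt (∑ i, (v i) ^ 2))⁻¹ • v


open ProbabilityTheory

/-- sign function -/
noncomputable def sg (x : ℝ) : ℝ := (if 0 < x then 1 else 0) - (if x < 0 then 1 else 0)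

lemma measurable_sg : Measurable sg := by
  unfold sg
  exact (Measurable.ite measurableSet_Ioi measurable_const measurable_const).sub
    (Measurable.ite measurableSet_Iio measurable_const measurable_const)

lemma abs_sg_le (x : ℝ) : |sg x| ≤ 1 := by
  unfold sg
  split_ifs <;> norm_num

noncomputable def psi (t : ℝ) : ℝ := ∫ g, sg (t + g) ∂(gaussianReal 0 1)

lemma psi_eq (t : ℝ) : psi t = 1 - 2 * ∫ x in Set.Iic (-t), gaussianPDFReal 0 1 x := by
  unfold psi
  rw [integral_gaussianReal_eq_integral_smul one_ne_zero]
  have h1 : ∀ᵐ x : ℝ, gaussianPDFReal 0 1 x • sg (t + x) =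
      gaussianPDFReal 0 1 x - 2 * (Set.Iic (-t)).indicator (gaussianPDFReal 0 1) x := by
    filter_upwards [compl_mem_ae_iff.2 (measure_singleton (-t))] with x hx
    have hx' : x ≠ -t := hx
    rcases lt_or_gt_of_ne hx' with h | h
    · have : x ∈ Set.Iic (-t) := h.le
      rw [Set.indicator_of_mem this]
      have h2 : ¬ 0 < t + x := by linarith
      have h3 : t + x < 0 := by linarith
      simp [sg, h2, h3]; ring
    · have : x ∉ Set.Iic (-t) := by simpa using h
      rw [Set.indicator_of_notMem this]
      have h2 : 0 < t + x := by linarith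
      have h3 : ¬ t + x < 0 := by linarith
      simp [sg, h2, h3]
  rw [integral_congr_ae h1, integral_sub (integrable_gaussianPDFReal 0 1)
    (((integrable_gaussianPDFReal 0 1).indicator measurableSet_Iic).const_mul 2),
    integral_const_mul, integral_indicator measurableSet_Iic,
    integral_gaussianPDFReal_eq_one 0 one_ne_zero]

lemma cont_pdf : Continuous (gaussianPDFReal 0 1) := by
  unfold gaussianPDFReal
  fun_prop

lemma hasDerivAt_psi (t : ℝ) : HasDerivAt psi (2 * gaussianPDFReal 0 1 t) t := by
  have h0 : psi = fun t => 1 - 2 * ((∫ x in Set.Iic 0, gaussianPDFReal 0 1 x) +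
      ∫ x in (0:ℝ)..(-t), gaussianPDFReal 0 1 x) := by
    funext t
    rw [psi_eq, ← intervalIntegral.integral_Iic_sub_Iic (integrable_gaussianPDFReal 0 1).integrableOn
      (integrable_gaussianPDFReal 0 1).integrableOn]
    ring
  rw [h0]
  have h1 := (cont_pdf.integral_hasStrictDerivAt 0 (-t)).hasDerivAt
  have h2 := h1.comp t (hasDerivAt_neg t)
  have h3 := ((h2.const_add (∫ x in Set.Iic 0, gaussianPDFReal 0 1 x)).const_mul 2).const_sub 1
  have e : gaussianPDFReal 0 1 (-t) = gaussianPDFReal 0 1 t := by simp [gaussianPDFReal]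
  refine h3.congr_deriv ?_
  rw [e]; ring

lemma psi_abs_le (t : ℝ) : |psi t| ≤ 1 := by
  have := norm_integral_le_of_norm_le_const (μ := gaussianReal 0 1) (f := fun g => sg (t + g)) (C := 1)
    (Filter.Eventually.of_forall fun g => abs_sg_le _)
  simpa [psi] using this

section
variable {E : Type*} [NormedAddCommGroup E] [InnerProductSpace ℝ E] [FiniteDimensional ℝ E]
  [MeasurableSpace E] [BorelSpace E]

lemma gauss_avg (w y : E) (hy : ‖y‖ = 1) :
    ∫ g, sg (inner ℝ (w + g) y) ∂(stdGaussian E) = psi (inner ℝ w y) := by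
  have h := IsGaussian.map_eq_gaussianReal (μ := stdGaussian E) (innerSL ℝ y)
  rw [variance_dual_stdGaussian, integral_strongDual_stdGaussian, innerSL_apply_norm, hy] at h
  simp only [one_pow, Real.toNNReal_one] at h
  unfold psi
  have hm : Measurable (fun g : ℝ => sg (inner ℝ w y + g)) :=
    measurable_sg.comp (measurable_const.add measurable_id)
  rw [← h, integral_map (by fun_prop) hm.aestronglyMeasurable]
  simp only [inner_add_left, innerSL_apply_apply, real_inner_comm]

variable {Ω : Type*} [MeasurableSpace Ω] (P : Measure Ω) [IsProbabilityMeasure P]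

lemma int_psi (Y : Ω → E) (hY : Measurable Y) (h1 : ∀ᵐ ω ∂P, ‖Y ω‖ = 1)
    (hs : ∀ u : E, ∫ ω, sg (inner ℝ u (Y ω)) ∂P = 0) (w : E) : ∫ ω, psi (inner ℝ w (Y ω)) ∂P = 0 := by
  have : ∫ ω, psi (inner ℝ w (Y ω)) ∂P =
      ∫ ω, ∫ g, sg (inner ℝ (w + g) (Y ω)) ∂(stdGaussian E) ∂P := by
    refine integral_congr_ae ?_
    filter_upwards [h1] with ω hω
    exact (gauss_avg w _ hω).symm
  rw [this, integral_integral_swap]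
  · simp [hs]
  · refine Integrable.of_bound (C := 1) ?_ (Filter.Eventually.of_forall fun x => abs_sg_le _)
    refine (measurable_sg.comp ?_).aestronglyMeasurable
    fun_prop

end

section
variable {Ω : Type*} [MeasurableSpace Ω] (P : Measure Ω) [IsProbabilityMeasure P]

lemma step0 (T : Ω → ℝ) (hT : Measurable T) (C : ℝ) (hC : ∀ᵐ ω ∂P, |T ω| ≤ C)
    (h : ∀ s : ℝ, ∫ ω, psi (s * T ω) ∂P = 0) (l : ℝ) (hl : 0 < l) :
    ∫ ω, T ω ^ 1 * Real.exp (-l * T ω ^ 2) ∂P = 0 := by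
  have hpsi : Continuous psi := continuous_iff_continuousAt.2 fun t => (hasDerivAt_psi t).continuousAt
  have key : ∀ s : ℝ, ∫ ω, 2 * gaussianPDFReal 0 1 (s * T ω) * T ω ∂P = 0 := by
    intro s
    have := (hasDerivAt_integral_of_dominated_loc_of_deriv_le (μ := P) (𝕜 := ℝ)
      (F := fun s ω => psi (s * T ω)) (F' := fun s ω => 2 * gaussianPDFReal 0 1 (s * T ω) * T ω)
      (x₀ := s) (s := Set.univ) (bound := fun _ => 2 * C) Filter.univ_mem
      (Filter.Eventually.of_forall fun s => (hpsi.measurable.comp (hT.const_mul s)).aestronglyMeasurable)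
      (Integrable.of_bound (C := 1) (hpsi.measurable.comp (hT.const_mul s)).aestronglyMeasurable
        (Filter.Eventually.of_forall fun _ => psi_abs_le _))
      (((cont_pdf.measurable.comp (hT.const_mul s)).const_mul 2).mul hT).aestronglyMeasurable
      ?_ (integrable_const _) ?_).2
    · simp only [h] at this
      exact this.unique (hasDerivAt_const s 0)
    · filter_upwards [hC] with ω hω s _
      have h2 : gaussianPDFReal 0 1 (s * T ω) ≤ 1 := by
        simp only [gaussianPDFReal, NNReal.coe_one, mul_one, sub_zero]
        have h3 : 1 ≤ √(2 * Real.pi) := by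
          rw [Real.one_le_sqrt]; linarith [Real.pi_gt_three]
        have h4 : Real.exp (-(s * T ω) ^ 2 / 2) ≤ 1 := by
          rw [Real.exp_le_one_iff]; nlinarith [sq_nonneg (s * T ω)]
        exact mul_le_one₀ (inv_le_one_of_one_le₀ h3) (Real.exp_pos _).le h4
      have h5 := gaussianPDFReal_nonneg 0 1 (s * T ω)
      rw [Real.norm_eq_abs, abs_mul, abs_of_nonneg (by linarith)]
      exact mul_le_mul (by linarith) hω (abs_nonneg _) (by norm_num)
    · refine Filter.Eventually.of_forall fun ω s _ => ?_
      have h6 : HasDerivAt (fun s : ℝ => s * T ω) (T ω) s := by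
        simpa using (hasDerivAt_id s).mul_const (T ω)
      exact (hasDerivAt_psi (s * T ω)).comp s h6
  have k := key (√(2 * l))
  have : ∀ ω, 2 * gaussianPDFReal 0 1 (√(2 * l) * T ω) * T ω =
      (2 * (√(2 * Real.pi))⁻¹) * (T ω ^ 1 * Real.exp (-l * T ω ^ 2)) := by
    intro ω
    have e : -(√(2 * l) * T ω) ^ 2 / 2 = -l * T ω ^ 2 := by
      rw [mul_pow, Real.sq_sqrt (by linarith)]; ring
    simp only [gaussianPDFReal, NNReal.coe_one, mul_one, sub_zero, e]
    ring
  simp only [this, integral_const_mul] at k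
  refine (mul_eq_zero.1 k).resolve_left ?_
  have : 0 < √(2 * Real.pi) := Real.sqrt_pos.2 (by positivity)
  positivity

lemma deriv_step (T : Ω → ℝ) (hT : Measurable T) (C : ℝ) (hC : ∀ᵐ ω ∂P, |T ω| ≤ C)
    (m : ℕ) (l : ℝ) (hl : 0 < l) :
    HasDerivAt (fun l => ∫ ω, T ω ^ m * Real.exp (-l * T ω ^ 2) ∂P)
      (∫ ω, -(T ω ^ (m + 2) * Real.exp (-l * T ω ^ 2)) ∂P) l := by
  refine (hasDerivAt_integral_of_dominated_loc_of_deriv_le (μ := P) (𝕜 := ℝ)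
      (F := fun l ω => T ω ^ m * Real.exp (-l * T ω ^ 2))
      (F' := fun l ω => -(T ω ^ (m + 2) * Real.exp (-l * T ω ^ 2)))
      (x₀ := l) (s := Set.Ioi 0) (bound := fun _ => C ^ (m + 2)) (Ioi_mem_nhds hl)
      (Filter.Eventually.of_forall fun s => ?_) ?_ ?_ ?_ (integrable_const _) ?_).2
  · exact Measurable.aestronglyMeasurable (by fun_prop)
  · refine Integrable.of_bound (C := C ^ m) (Measurable.aestronglyMeasurable (by fun_prop)) ?_
    filter_upwards [hC] with ω hω
    rw [Real.norm_eq_abs, abs_mul, abs_pow, Real.abs_exp]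
    have : Real.exp (-l * T ω ^ 2) ≤ 1 := by
      rw [Real.exp_le_one_iff]; nlinarith [sq_nonneg (T ω)]
    have hC0 : 0 ≤ C := (abs_nonneg _).trans hω
    calc _ ≤ C ^ m * 1 := by gcongr
      _ = _ := mul_one _
  · exact Measurable.aestronglyMeasurable (by fun_prop)
  · filter_upwards [hC] with ω hω l hl
    have hl : 0 < l := hl
    rw [norm_neg, Real.norm_eq_abs, abs_mul, abs_pow, Real.abs_exp]
    have : Real.exp (-l * T ω ^ 2) ≤ 1 := by
      rw [Real.exp_le_one_iff]; nlinarith [sq_nonneg (T ω)]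
    have hC0 : 0 ≤ C := (abs_nonneg _).trans hω
    calc _ ≤ C ^ (m + 2) * 1 := by gcongr
      _ = _ := mul_one _
  · refine Filter.Eventually.of_forall fun ω s _ => ?_
    have h6 : HasDerivAt (fun s : ℝ => -s * T ω ^ 2) (-1 * T ω ^ 2) s :=
      (hasDerivAt_neg s).mul_const _
    refine (h6.exp.const_mul (T ω ^ m)).congr_deriv ?_
    ring

lemma odd_mom (T : Ω → ℝ) (hT : Measurable T) (C : ℝ) (hC : ∀ᵐ ω ∂P, |T ω| ≤ C)
    (h : ∀ s : ℝ, ∫ ω, psi (s * T ω) ∂P = 0) (k : ℕ) :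
    ∀ l : ℝ, 0 < l → ∫ ω, T ω ^ (2 * k + 1) * Real.exp (-l * T ω ^ 2) ∂P = 0 := by
  induction k with
  | zero => exact step0 P T hT C hC h
  | succ k ih =>
    intro l hl
    have h1 := deriv_step P T hT C hC (2 * k + 1) l hl
    have h2 : HasDerivAt (fun l => ∫ ω, T ω ^ (2 * k + 1) * Real.exp (-l * T ω ^ 2) ∂P) 0 l := by
      refine (hasDerivAt_const l (0 : ℝ)).congr_of_eventuallyEq ?_
      filter_upwards [Ioi_mem_nhds hl] with x hx
      exact ih x hx
    have h3 := h1.unique h2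
    rw [integral_neg, neg_eq_zero] at h3
    exact h3

lemma int_sin_exp (T : Ω → ℝ) (hT : Measurable T) (C : ℝ) (hC : ∀ᵐ ω ∂P, |T ω| ≤ C)
    (h : ∀ s : ℝ, ∫ ω, psi (s * T ω) ∂P = 0) (l : ℝ) (hl : 0 < l) :
    ∫ ω, Real.sin (T ω) * Real.exp (-l * T ω ^ 2) ∂P = 0 := by
  have hb : ∀ k, ∀ᵐ ω ∂P, ‖(-1) ^ k * T ω ^ (2 * k + 1) / ((2 * k + 1).factorial : ℝ) *
      Real.exp (-l * T ω ^ 2)‖ ≤ C ^ (2 * k + 1) / ((2 * k + 1).factorial : ℝ) := by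
    intro k
    filter_upwards [hC] with ω hω
    have : Real.exp (-l * T ω ^ 2) ≤ 1 := by
      rw [Real.exp_le_one_iff]; nlinarith [sq_nonneg (T ω)]
    rw [Real.norm_eq_abs, abs_mul, Real.abs_exp, abs_div, abs_mul, abs_pow, abs_pow, abs_neg,
      abs_one, one_pow, one_mul, Nat.abs_cast]
    have hC0 : 0 ≤ C := (abs_nonneg _).trans hω
    calc _ ≤ C ^ (2 * k + 1) / ((2 * k + 1).factorial : ℝ) * 1 := by gcongr
      _ = _ := mul_one _
  have hi : ∀ k, Integrable (fun ω => (-1) ^ k * T ω ^ (2 * k + 1) / ((2 * k + 1).factorial : ℝ) *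
      Real.exp (-l * T ω ^ 2)) P := fun k =>
    Integrable.of_bound (Measurable.aestronglyMeasurable (by fun_prop)) _ (hb k)
  have hsum : Summable fun k : ℕ => C ^ (2 * k + 1) / ((2 * k + 1).factorial : ℝ) :=
    (Real.summable_pow_div_factorial C).comp_injective (i := fun k : ℕ => 2 * k + 1)
      (fun a b hab => by simpa using hab)
  have := hasSum_integral_of_summable_integral_norm hi
    (hsum.of_nonneg_of_le (fun k => integral_nonneg fun _ => norm_nonneg _) (fun k => by
      calc _ ≤ ∫ ω, C ^ (2 * k + 1) / ((2 * k + 1).factorial : ℝ) ∂P :=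
            integral_mono_ae (hi k).norm (integrable_const _) (hb k)
        _ = _ := by simp))
  have e : ∀ ω, ∑' k : ℕ, (-1) ^ k * T ω ^ (2 * k + 1) / ((2 * k + 1).factorial : ℝ) *
      Real.exp (-l * T ω ^ 2) = Real.sin (T ω) * Real.exp (-l * T ω ^ 2) := fun ω =>
    ((Real.hasSum_sin (T ω)).mul_right _).tsum_eq
  simp only [e] at this
  refine this.unique ?_
  convert hasSum_zero with k
  have e2 : ∀ ω, (-1) ^ k * T ω ^ (2 * k + 1) / ((2 * k + 1).factorial : ℝ) *
      Real.exp (-l * T ω ^ 2) = (-1) ^ k / ((2 * k + 1).factorial : ℝ) *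
        (T ω ^ (2 * k + 1) * Real.exp (-l * T ω ^ 2)) := fun ω => by ring
  simp only [e2, integral_const_mul, odd_mom P T hT C hC h k l hl, mul_zero]

lemma int_sin (T : Ω → ℝ) (hT : Measurable T) (C : ℝ) (hC : ∀ᵐ ω ∂P, |T ω| ≤ C)
    (h : ∀ s : ℝ, ∫ ω, psi (s * T ω) ∂P = 0) :
    ∫ ω, Real.sin (T ω) ∂P = 0 := by
  have := tendsto_integral_of_dominated_convergence (μ := P)
    (F := fun (n : ℕ) ω => Real.sin (T ω) * Real.exp (-(1 / ((n : ℝ) + 1)) * T ω ^ 2))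
    (f := fun ω => Real.sin (T ω)) (fun _ => 1)
    (fun n => Measurable.aestronglyMeasurable (by fun_prop)) (integrable_const _)
    (fun n => Filter.Eventually.of_forall fun ω => ?_) (Filter.Eventually.of_forall fun ω => ?_)
  · have e : ∀ n : ℕ, ∫ ω, Real.sin (T ω) * Real.exp (-(1 / ((n : ℝ) + 1)) * T ω ^ 2) ∂P = 0 :=
      fun n => int_sin_exp P T hT C hC h _ (by positivity)
    simp only [e] at this
    exact tendsto_nhds_unique this tendsto_const_nhds
  · rw [Real.norm_eq_abs, abs_mul, Real.abs_exp]
    refine mul_le_one₀ (Real.abs_sin_le_one _) (Real.exp_pos _).le ?_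
    rw [Real.exp_le_one_iff]
    have : (0 : ℝ) < 1 / ((n : ℝ) + 1) := by positivity
    nlinarith [sq_nonneg (T ω)]
  · have h1 := (tendsto_one_div_add_atTop_nhds_zero_nat (𝕜 := ℝ)).neg.mul_const (T ω ^ 2)
    have h2 := ((Real.continuous_exp.tendsto _).comp h1).const_mul (Real.sin (T ω))
    simpa using h2

end

/-- Main analytic fact. -/
lemma sin_of_sign {d : ℕ} {Ω : Type*} [MeasurableSpace Ω] (P : Measure Ω) [IsProbabilityMeasure P]
    (Y : Ω → Fin d → ℝ) (hY : Measurable Y) (h1 : ∀ᵐ ω ∂P, ∑ i, (Y ω i) ^ 2 = 1)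
    (hs : ∀ u : Fin d → ℝ, ∫ ω, sg (∑ i, u i * Y ω i) ∂P = 0) (v : Fin d → ℝ) :
    ∫ ω, Real.sin (∑ i, v i * Y ω i) ∂P = 0 := by
  let Z : Ω → EuclideanSpace ℝ (Fin d) := fun ω => WithLp.toLp 2 (Y ω)
  have hZ : Measurable Z := by fun_prop
  have hin : ∀ (u : EuclideanSpace ℝ (Fin d)) ω, inner ℝ u (Z ω) = ∑ i, u i * Y ω i := by
    intro u ω
    simp [Z, PiLp.inner_apply, mul_comm]
  have hn : ∀ᵐ ω ∂P, ‖Z ω‖ = 1 := by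
    filter_upwards [h1] with ω hω
    simp [Z, EuclideanSpace.norm_eq, hω]
  have hk := int_psi P Z hZ hn (fun u => by simp only [hin]; exact hs _)
  have := int_sin P (fun ω => inner ℝ (WithLp.toLp 2 v) (Z ω)) (by fun_prop)
    ‖(WithLp.toLp 2 v : EuclideanSpace ℝ (Fin d))‖ (by
      filter_upwards [hn] with ω hω
      have := abs_real_inner_le_norm (WithLp.toLp 2 v) (Z ω)
      rwa [hω, mul_one] at this) (fun s => by
      have := hk (s • WithLp.toLp 2 v)
      simpa only [real_inner_smul_left] using this)
  simpa only [hin] using this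

lemma sg_mul_pos (c x : ℝ) (hc : 0 < c) : sg (c * x) = sg x := by
  have h1 : 0 < c * x ↔ 0 < x := by simp [mul_pos_iff_of_pos_left hc]
  have h2 : c * x < 0 ↔ x < 0 := by
    constructor <;> intro h <;> nlinarith
  simp only [sg, h1, h2]

lemma measurable_dir {d : ℕ} : Measurable (dir (d := d)) := by
  unfold dir
  fun_prop

lemma sum_sq_dir {d : ℕ} (z : Fin d → ℝ) (hz : z ≠ 0) : ∑ i, (dir z i) ^ 2 = 1 := by
  have h0 : 0 ≤ ∑ i, (z i) ^ 2 := Finset.sum_nonneg fun i _ => sq_nonneg _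
  have h1 : ∑ i, (z i) ^ 2 ≠ 0 := by
    intro h
    rw [Finset.sum_eq_zero_iff_of_nonneg (fun i _ => sq_nonneg _)] at h
    exact hz (funext fun i => by simpa using h i (Finset.mem_univ i))
  simp only [dir, Pi.smul_apply, smul_eq_mul, mul_pow, ← Finset.mul_sum, inv_pow, Real.sq_sqrt h0]
  exact inv_mul_cancel₀ h1

lemma sg_dir {d : ℕ} (u z : Fin d → ℝ) : sg (∑ i, u i * dir z i) = sg (∑ i, u i * z i) := by
  by_cases hz : z = 0
  · subst hz; simp [dir]
  have hp : 0 < ∑ i, (z i) ^ 2 := by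
    refine lt_of_le_of_ne (Finset.sum_nonneg fun i _ => sq_nonneg _) fun h => hz ?_
    have h := h.symm
    rw [Finset.sum_eq_zero_iff_of_nonneg (fun i _ => sq_nonneg _)] at h
    exact funext fun i => by simpa using h i (Finset.mem_univ i)
  have e : ∑ i, u i * dir z i = (Real.sqrt (∑ i, (z i) ^ 2))⁻¹ * ∑ i, u i * z i := by
    rw [Finset.mul_sum]
    refine Finset.sum_congr rfl fun i _ => ?_
    simp only [dir, Pi.smul_apply, smul_eq_mul]; ring
  rw [e, sg_mul_pos _ _ (inv_pos.2 (Real.sqrt_pos.2 hp))]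

lemma sum_single {n : ℕ} (u : Fin (n + 1) → ℝ) (η : ℝ) :
    ∑ i, u i * (Pi.single 0 η : Fin (n + 1) → ℝ) i = u 0 * η := by
  simp [Pi.single_apply]

lemma half_all {n : ℕ} (η : ℝ) (μ : Measure (Fin (n + 1) → ℝ))
    (hmed : ∀ u : Fin (n + 1) → ℝ, ∑ i, (u i) ^ 2 = 1 →
      (μ {y | ∑ i, u i * y i ≤ u 0 * η}).toReal = 1 / 2)
    (u : Fin (n + 1) → ℝ) (hu : u ≠ 0) : (μ {y | ∑ i, u i * y i ≤ u 0 * η}).toReal = 1 / 2 := by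
  rw [← hmed (dir u) (sum_sq_dir u hu)]
  congr 2
  ext y
  have hp : 0 < ∑ i, (u i) ^ 2 := by
    refine lt_of_le_of_ne (Finset.sum_nonneg fun i _ => sq_nonneg _) fun h => hu ?_
    have h := h.symm
    rw [Finset.sum_eq_zero_iff_of_nonneg (fun i _ => sq_nonneg _)] at h
    exact funext fun i => by simpa using h i (Finset.mem_univ i)
  have hc := inv_pos.2 (Real.sqrt_pos.2 hp)
  simp only [Set.mem_ofPred_eq, dir, Pi.smul_apply, smul_eq_mul, mul_assoc, ← Finset.mul_sum]
  exact (mul_le_mul_iff_right₀ hc).symm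

lemma int_sg {n : ℕ} (η : ℝ) (μ : Measure (Fin (n + 1) → ℝ)) [IsProbabilityMeasure μ]
    (hcont : ∀ u : Fin (n + 1) → ℝ, u ≠ 0 → ∀ t : ℝ, μ {y | ∑ i, u i * y i = t} = 0)
    (hmed : ∀ u : Fin (n + 1) → ℝ, ∑ i, (u i) ^ 2 = 1 →
      (μ {y | ∑ i, u i * y i ≤ u 0 * η}).toReal = 1 / 2) (u : Fin (n + 1) → ℝ) :
    ∫ y, sg (∑ i, u i * dir (y - Pi.single 0 η) i) ∂μ = 0 := by
  simp only [sg_dir]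
  by_cases hu : u = 0
  · subst hu; simp [sg]
  have e : ∀ y : Fin (n + 1) → ℝ, ∑ i, u i * (y - (Pi.single 0 η : Fin (n + 1) → ℝ)) i = ∑ i, u i * y i - u 0 * η := by
    intro y
    rw [← sum_single u η, ← Finset.sum_sub_distrib]
    exact Finset.sum_congr rfl fun i _ => by rw [Pi.sub_apply]; ring
  simp only [e]
  have hms : MeasurableSet {y : Fin (n + 1) → ℝ | ∑ i, u i * y i ≤ u 0 * η} :=
    measurableSet_le (by fun_prop) measurable_const
  have h1 : ∀ᵐ y ∂μ, sg (∑ i, u i * y i - u 0 * η) =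
      1 - 2 * ({y : Fin (n + 1) → ℝ | ∑ i, u i * y i ≤ u 0 * η}).indicator (fun _ => (1 : ℝ)) y := by
    filter_upwards [compl_mem_ae_iff.2 (hcont u hu (u 0 * η))] with y hy
    have hy' : ∑ i, u i * y i ≠ u 0 * η := hy
    rcases lt_or_gt_of_ne hy' with h | h
    · rw [Set.indicator_of_mem (show y ∈ {y : Fin (n + 1) → ℝ | ∑ i, u i * y i ≤ u 0 * η} from h.le)]
      simp only [sg, if_neg (show ¬ 0 < ∑ i, u i * y i - u 0 * η by linarith),
        if_pos (show ∑ i, u i * y i - u 0 * η < 0 by linarith)]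
      norm_num
    · rw [Set.indicator_of_notMem
        (show y ∉ {y : Fin (n + 1) → ℝ | ∑ i, u i * y i ≤ u 0 * η} from not_le.2 h)]
      simp only [sg, if_pos (show 0 < ∑ i, u i * y i - u 0 * η by linarith),
        if_neg (show ¬ ∑ i, u i * y i - u 0 * η < 0 by linarith)]
      norm_num
  rw [integral_congr_ae h1, integral_sub (integrable_const _)
    (((integrable_const _).indicator hms).const_mul 2), integral_const_mul,
    integral_indicator_const _ hms]
  have := half_all η μ hmed u hu
  simp only [Measure.real, this]
  simp

lemma ang_symm {n : ℕ} (η : ℝ) (μ : Measure (Fin (n + 1) → ℝ)) [IsProbabilityMeasure μ]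
    (hcont : ∀ u : Fin (n + 1) → ℝ, u ≠ 0 → ∀ t : ℝ, μ {y | ∑ i, u i * y i = t} = 0)
    (hmed : ∀ u : Fin (n + 1) → ℝ, ∑ i, (u i) ^ 2 = 1 →
      (μ {y | ∑ i, u i * y i ≤ u 0 * η}).toReal = 1 / 2) :
    μ.map (fun y => dir (y - Pi.single 0 η)) = μ.map (fun y => -dir (y - Pi.single 0 η)) := by
  have hY : Measurable (fun y : Fin (n + 1) → ℝ => dir (y - Pi.single 0 η)) :=
    measurable_dir.comp (measurable_id.sub_const _)
  have hY' : Measurable (fun y : Fin (n + 1) → ℝ => -dir (y - Pi.single 0 η)) := hY.neg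
  have h1 : ∀ᵐ y ∂μ, ∑ i, (dir (y - Pi.single 0 η) i) ^ 2 = 1 := by
    have := hcont (Pi.single 0 1) (by simp) η
    filter_upwards [compl_mem_ae_iff.2 this] with y hy
    refine sum_sq_dir _ fun h => hy ?_
    have h2 := congrFun h 0
    simp only [Pi.sub_apply, Pi.single_eq_same, Pi.zero_apply] at h2
    simp [Pi.single_apply]
    linarith
  have hsin := sin_of_sign μ _ hY h1 (int_sg η μ hcont hmed)
  have := Measure.isFiniteMeasure_map μ (fun y : Fin (n + 1) → ℝ => dir (y - Pi.single 0 η))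
  have := Measure.isFiniteMeasure_map μ (fun y : Fin (n + 1) → ℝ => -dir (y - Pi.single 0 η))
  refine Measure.ext_of_charFunDual ?_
  ext L
  have hL : ∀ z : Fin (n + 1) → ℝ, L z = ∑ i, L (Pi.single i 1) * z i := by
    intro z
    conv_lhs => rw [← Finset.univ_sum_single z, map_sum]
    refine Finset.sum_congr rfl fun i _ => ?_
    have : (Pi.single i (z i) : Fin (n + 1) → ℝ) = z i • Pi.single i 1 := by
      rw [← Pi.single_smul, smul_eq_mul, mul_one]
    rw [this, map_smul, smul_eq_mul, mul_comm]
  have hs := hsin (fun i => L (Pi.single i 1))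
  simp only [← hL] at hs
  rw [charFunDual_apply, charFunDual_apply, integral_map hY.aemeasurable (by fun_prop),
    integral_map hY'.aemeasurable (by fun_prop)]
  have hLY : Measurable (fun y : Fin (n + 1) → ℝ => L (dir (y - Pi.single 0 η))) :=
    L.continuous.measurable.comp hY
  have hi : ∀ s : ℝ, Integrable (fun y => Complex.exp ((s * L (dir (y - Pi.single 0 η)) : ℝ) * Complex.I)) μ := by
    intro s
    refine Integrable.of_bound (C := 1) (Measurable.aestronglyMeasurable (by fun_prop)) ?_
    exact Filter.Eventually.of_forall fun y => (Complex.norm_exp_ofReal_mul_I _).le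
  rw [← sub_eq_zero, ← integral_sub (by simpa using hi 1) (by simpa using hi (-1))]
  have e : ∀ y : Fin (n + 1) → ℝ, Complex.exp (L (dir (y - Pi.single 0 η)) * Complex.I) -
      Complex.exp (L (-dir (y - Pi.single 0 η)) * Complex.I) =
      (2 * Complex.I) * (Real.sin (L (dir (y - Pi.single 0 η))) : ℝ) := by
    intro y
    rw [map_neg, Complex.exp_mul_I, Complex.exp_mul_I, Complex.ofReal_neg, Complex.cos_neg,
      Complex.sin_neg, Complex.ofReal_sin]
    ring
  simp only [e]
  rw [integral_const_mul, integral_complex_ofReal, hs]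
  simp

/-- If `X ∼ CSC_d(γ)` (law `μ`, with atomless one-dimensional projections) is such
that every projection `uᵀX` with unit `u` has median `u₁ η`, where `η = γ/√(1+γ²)`,
then `X` is angularly symmetric about `β = (η,0,…,0)` and `HD_X(β) = 1/2`. -/
theorem csc_angular_symmetry {n : ℕ} (γ : ℝ) (μ : Measure (Fin (n + 1) → ℝ))
    [IsProbabilityMeasure μ]
    (hcont : ∀ u : Fin (n + 1) → ℝ, u ≠ 0 → ∀ t : ℝ, μ {y | ∑ i, u i * y i = t} = 0)
    (hmed : ∀ u : Fin (n + 1) → ℝ, ∑ i, (u i) ^ 2 = 1 →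
      (μ {y | ∑ i, u i * y i ≤ u 0 * (γ / Real.sqrt (1 + γ ^ 2))}).toReal = 1 / 2) :
    μ.map (fun y => dir (y - Pi.single 0 (γ / Real.sqrt (1 + γ ^ 2)))) =
      μ.map (fun y => -dir (y - Pi.single 0 (γ / Real.sqrt (1 + γ ^ 2)))) ∧
    HD μ (Pi.single 0 (γ / Real.sqrt (1 + γ ^ 2))) = 1 / 2 := by
  refine ⟨ang_symm _ μ hcont hmed, ?_⟩
  unfold HD
  have : ∀ u : {u : Fin (n + 1) → ℝ // ∑ i, (u i) ^ 2 = 1},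
      (μ {y | ∑ i, u.1 i * y i ≤ ∑ i, u.1 i *
        (Pi.single 0 (γ / Real.sqrt (1 + γ ^ 2)) : Fin (n + 1) → ℝ) i}).toReal = 1 / 2 := by
    intro u
    rw [sum_single]
    exact hmed u.1 u.2
  have hne : Nonempty {u : Fin (n + 1) → ℝ // ∑ i, (u i) ^ 2 = 1} :=
    ⟨Pi.single 0 1, by simp [Pi.single_apply]⟩
  simp only [this, ciInf_const]
end
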